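/- arXiv:2203.07527 — 12 statements merged into one kernel-verified Lean document; each statement's English description precedes it below -/
import Mathlib

section
/- Fix β ∈ ℝ, ε ∈ (0,1], nonempty finite sets X and Z with N_x = |X|, N_z = |Z|, and a probability vector p on X. For a conditional probability family q = (q(z|x)) (each q(·|x) a probability vector on Z), let m_q(z) := ∑_x q(z|x) p(x) be the induced marginal on Z, and define G(q) := (β − 1) H(m_q) + H_q(Z|X), where H(m_q) := −∑_z m_q(z) log m_q(z) and H_q(Z|X) := −∑_x p(x) ∑_z q(z|x) log q(z|x). Then for any two ε-infimal conditional families q, q′: G(q′) ≥ G(q) + ⟨∇G(q), q′ − q⟩ − (σ_G/2) ‖q′ − q‖₂², where σ_G := 2 N_z (|β − 1| + N_x)/ε. That is, G is σ_G-weakly convex on the set of ε-infimal conditional probability families. -/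
lemma breg_bounds {a b ε : ℝ} (hε : 0 < ε) (ha : ε ≤ a) (hb : ε ≤ b) :
    0 ≤ a * Real.log a - b * Real.log b - (Real.log b + 1) * (a - b) ∧
    a * Real.log a - b * Real.log b - (Real.log b + 1) * (a - b) ≤ (a - b) ^ 2 / ε := by
  have ha0 : 0 < a := by linarith
  have hb0 : 0 < b := by linarith
  have h1 := Real.log_le_sub_one_of_pos (div_pos ha0 hb0)
  have h2 := Real.log_le_sub_one_of_pos (div_pos hb0 ha0)
  rw [Real.log_div ha0.ne' hb0.ne'] at h1
  rw [Real.log_div hb0.ne' ha0.ne'] at h2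
  have h3 := mul_le_mul_of_nonneg_left h1 ha0.le
  have h4 := mul_le_mul_of_nonneg_left h2 ha0.le
  have e4 : a * (b / a - 1) = b - a := by field_simp
  have e3 : a * (a / b - 1) = (a - b) ^ 2 / b + (a - b) := by field_simp; ring
  have h5 : (a - b) ^ 2 / b ≤ (a - b) ^ 2 / ε :=
    div_le_div_of_nonneg_left (sq_nonneg _) hε hb
  rw [e4] at h4
  rw [e3] at h3
  constructor <;> nlinarith


/-- (Weak convexity of the privacy-funnel sub-objective.) Fix `β`,
`ε ∈ (0,1]`, finite nonempty sets `X, Z`, and a probability vector `p` on `X`. For a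
conditional probability family `q`, let `m_q z := ∑ x, q z x * p x` be the induced
marginal on `Z`, and define
`G(q) := (β - 1) * H(m_q) + H_q(Z|X)` where `H(m) := -∑ z, m z * log (m z)` and
`H_q(Z|X) := -∑ x, p x * ∑ z, q z x * log (q z x)`, with gradient entries
`(∇G q)_{z,x} = -(p x) * ((β - 1) * (log (m_q z) + 1) + (log (q z x) + 1))`.
Then for any two `ε`-infimal conditional families `q, q'`:
`G q' ≥ G q + ⟨∇G q, q' - q⟩ - (σ_G/2) * ‖q' - q‖₂²` with
`σ_G := 2 * N_z * (|β - 1| + N_x) / ε`, i.e. `G` is `σ_G`-weakly convex on the set of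
`ε`-infimal conditional probability families. -/
theorem pf_subobjective_weakly_convex {X Z : Type*}
    [Fintype X] [Nonempty X] [Fintype Z] [Nonempty Z]
    (β ε : ℝ) (hε0 : 0 < ε) (hε1 : ε ≤ 1)
    (p : X → ℝ) (hp0 : ∀ x, 0 ≤ p x) (hp1 : ∑ x, p x = 1)
    (q q' : Z → X → ℝ)
    (hqsum : ∀ x, ∑ z, q z x = 1) (hq'sum : ∀ x, ∑ z, q' z x = 1)
    (hqε : ∀ z x, ε ≤ q z x) (hq'ε : ∀ z x, ε ≤ q' z x) :
    (β - 1) * (-∑ z, (∑ x, q' z x * p x) * Real.log (∑ x, q' z x * p x))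
      + (-∑ x, p x * ∑ z, q' z x * Real.log (q' z x)) ≥
    (β - 1) * (-∑ z, (∑ x, q z x * p x) * Real.log (∑ x, q z x * p x))
      + (-∑ x, p x * ∑ z, q z x * Real.log (q z x))
      + (∑ z, ∑ x,
          (-(p x) * ((β - 1) * (Real.log (∑ x', q z x' * p x') + 1)
            + (Real.log (q z x) + 1))) * (q' z x - q z x))
      - ((2 * (Fintype.card Z : ℝ) * (|β - 1| + (Fintype.card X : ℝ)) / ε) / 2) *
          ∑ z, ∑ x, (q' z x - q z x) ^ 2 := by
  set S := ∑ z, ∑ x, (q' z x - q z x) ^ 2 with hS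
  have hple : ∀ x, p x ≤ 1 := fun x => by
    rw [← hp1]; exact Finset.single_le_sum (fun i _ => hp0 i) (Finset.mem_univ x)
  have hm : ∀ r : Z → X → ℝ, (∀ z x, ε ≤ r z x) → ∀ z, ε ≤ ∑ x, r z x * p x := by
    intro r hr z
    calc ε = ∑ x, ε * p x := by rw [← Finset.mul_sum, hp1, mul_one]
      _ ≤ _ := Finset.sum_le_sum fun x _ => mul_le_mul_of_nonneg_right (hr z x) (hp0 x)
  have hS0 : 0 ≤ S := Finset.sum_nonneg fun z _ => Finset.sum_nonneg fun x _ => sq_nonneg _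
  have key : ∀ z, -((|β - 1| + 1) / ε * ∑ x, (q' z x - q z x) ^ 2) ≤
      (β - 1) * (-((∑ x, q' z x * p x) * Real.log (∑ x, q' z x * p x)))
      - ∑ x, p x * (q' z x * Real.log (q' z x))
      - (β - 1) * (-((∑ x, q z x * p x) * Real.log (∑ x, q z x * p x)))
      + ∑ x, p x * (q z x * Real.log (q z x))
      - (∑ x, (-(p x) * ((β - 1) * (Real.log (∑ x', q z x' * p x') + 1)
            + (Real.log (q z x) + 1))) * (q' z x - q z x)) := by
    intro z
    have hd : (∑ x, q' z x * p x) - (∑ x, q z x * p x) = ∑ x, p x * (q' z x - q z x) := by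
      rw [← Finset.sum_sub_distrib]; exact Finset.sum_congr rfl fun x _ => by ring
    have hb := breg_bounds hε0 (hm q' hq'ε z) (hm q hqε z)
    set m' := ∑ x, q' z x * p x
    set m := ∑ x, q z x * p x
    have e1 : (∑ x, (-(p x) * ((β - 1) * (Real.log m + 1)
            + (Real.log (q z x) + 1))) * (q' z x - q z x)) =
        -((β - 1) * (Real.log m + 1) * (m' - m))
          - ∑ x, p x * ((Real.log (q z x) + 1) * (q' z x - q z x)) := by
      rw [hd, Finset.mul_sum, ← Finset.sum_neg_distrib, ← Finset.sum_sub_distrib]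
      exact Finset.sum_congr rfl fun x _ => by ring
    have e2 : ∑ x, p x * (q' z x * Real.log (q' z x)) - ∑ x, p x * (q z x * Real.log (q z x))
        - ∑ x, p x * ((Real.log (q z x) + 1) * (q' z x - q z x))
        ≤ (∑ x, (q' z x - q z x) ^ 2) / ε := by
      rw [← Finset.sum_sub_distrib, ← Finset.sum_sub_distrib, Finset.sum_div]
      refine Finset.sum_le_sum fun x _ => ?_
      have h := breg_bounds hε0 (hq'ε z x) (hqε z x)
      have h2 := mul_le_mul_of_nonneg_right (hple x) h.1
      nlinarith [h.2]
    have e3 : (m' - m) ^ 2 ≤ ∑ x, (q' z x - q z x) ^ 2 := by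
      rw [hd]
      refine (Finset.sum_mul_sq_le_sq_mul_sq Finset.univ p fun x => q' z x - q z x).trans ?_
      have hp2 : ∑ x, p x ^ 2 ≤ 1 := by
        rw [← hp1]
        exact Finset.sum_le_sum fun x _ => by nlinarith [hp0 x, hple x]
      have h0 : 0 ≤ ∑ x, (q' z x - q z x) ^ 2 := Finset.sum_nonneg fun x _ => sq_nonneg _
      nlinarith
    have e4 := div_le_div_of_nonneg_right e3 hε0.le
    have e5 : (β - 1) * (m' * Real.log m' - m * Real.log m - (Real.log m + 1) * (m' - m))
        ≤ |β - 1| * ((∑ x, (q' z x - q z x) ^ 2) / ε) :=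
      (mul_le_mul_of_nonneg_right (le_abs_self _) hb.1).trans
        (mul_le_mul_of_nonneg_left (hb.2.trans e4) (abs_nonneg _))
    rw [e1]
    have e6 : (|β - 1| + 1) / ε * ∑ x, (q' z x - q z x) ^ 2 =
      |β - 1| * ((∑ x, (q' z x - q z x) ^ 2) / ε) + (∑ x, (q' z x - q z x) ^ 2) / ε := by ring
    rw [e6]
    linarith
  have tot := Finset.sum_le_sum fun z (_ : z ∈ Finset.univ) => key z
  simp only [Finset.sum_add_distrib, Finset.sum_sub_distrib, Finset.sum_neg_distrib,
    ← Finset.mul_sum] at tot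
  rw [← hS] at tot
  have sw : ∀ r : Z → X → ℝ, ∑ x, p x * ∑ z, r z x * Real.log (r z x)
      = ∑ z, ∑ x, p x * (r z x * Real.log (r z x)) := by
    intro r
    rw [Finset.sum_comm]
    exact Finset.sum_congr rfl fun x _ => by rw [Finset.mul_sum]
  rw [sw q, sw q']
  have hX : (1 : ℝ) ≤ Fintype.card X := by exact_mod_cast Fintype.card_pos
  have hZ : (1 : ℝ) ≤ Fintype.card Z := by exact_mod_cast Fintype.card_pos
  have hc : (|β - 1| + 1) / ε ≤
      (2 * (Fintype.card Z : ℝ) * (|β - 1| + (Fintype.card X : ℝ)) / ε) / 2 := by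
    have : (2 * (Fintype.card Z : ℝ) * (|β - 1| + (Fintype.card X : ℝ)) / ε) / 2 =
      ((Fintype.card Z : ℝ) * (|β - 1| + (Fintype.card X : ℝ))) / ε := by ring
    rw [this]
    refine div_le_div_of_nonneg_right ?_ hε0.le
    nlinarith [abs_nonneg (β - 1)]
  have hcS := mul_le_mul_of_nonneg_right hc hS0
  linarith
end

section
/- Let F be a differentiable convex function on ℝⁿ, let A and B be real matrices of compatible sizes, let c > 0, and let vectors p, p′, q, ν satisfy the first-order condition ∇F(p′) = −Aᵀ[ν + c(A p′ − B q)]. Then L_c(p, q, ν) − L_c(p′, q, ν) ≥ (c/2) ‖A p − A p′‖². -/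
open scoped RealInnerProductSpace

/-- The augmented Lagrangian
`L_c(p, q, ν) := F p + G q + ⟨ν, A p - B q⟩ + (c/2) ‖A p - B q‖²`. -/
noncomputable def augLag {E E₂ H : Type*}
    [NormedAddCommGroup E] [InnerProductSpace ℝ E]
    [NormedAddCommGroup E₂] [InnerProductSpace ℝ E₂]
    [NormedAddCommGroup H] [InnerProductSpace ℝ H]
    (F : E → ℝ) (G : E₂ → ℝ) (A : E →L[ℝ] H) (B : E₂ →L[ℝ] H) (c : ℝ)
    (p : E) (q : E₂) (ν : H) : ℝ :=
  F p + G q + ⟪ν, A p - B q⟫ + c / 2 * ‖A p - B q‖ ^ 2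

/-- Let `F` be a differentiable convex function, `A, B` matrices (linear
maps) of compatible sizes, `c > 0`, and suppose `p', q, ν` satisfy the first-order
condition `∇F(p') = -Aᵀ (ν + c (A p' - B q))`. Then
`L_c(p, q, ν) - L_c(p', q, ν) ≥ (c/2) ‖A p - A p'‖²`. -/
theorem augLag_decrease_p_update {E E₂ H : Type*}
    [NormedAddCommGroup E] [InnerProductSpace ℝ E] [CompleteSpace E]
    [NormedAddCommGroup E₂] [InnerProductSpace ℝ E₂]
    [NormedAddCommGroup H] [InnerProductSpace ℝ H]
    (F : E → ℝ) (gradF : E → E) (hFdiff : ∀ x, HasGradientAt F (gradF x) x)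
    (hFconv : ∀ x y, F y ≥ F x + ⟪gradF x, y - x⟫)
    (G : E₂ → ℝ)
    (A : E →L[ℝ] H) (At : H →L[ℝ] E)
    (hAt : ∀ (x : E) (ξ : H), ⟪A x, ξ⟫ = ⟪x, At ξ⟫)
    (B : E₂ →L[ℝ] H)
    (c : ℝ) (hc : 0 < c) (p p' : E) (q : E₂) (ν : H)
    (hmin : gradF p' = -(At (ν + c • (A p' - B q)))) :
    augLag F G A B c p q ν - augLag F G A B c p' q ν ≥ c / 2 * ‖A p - A p'‖ ^ 2 := by
  have h1 := hFconv p' p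
  have h2 := hAt (p - p') (ν + c • (A p' - B q))
  rw [hmin, inner_neg_left, real_inner_comm, ← h2, map_sub, inner_add_right,
    inner_smul_right] at h1
  have h3 : A p - B q = (A p - A p') + (A p' - B q) := by abel
  unfold augLag
  rw [h3, inner_add_right, norm_add_sq_real, real_inner_comm (A p - A p') ν]
  nlinarith [h1]
end

section
/- Let G be a differentiable σ_G-weakly convex function, let A and B be real matrices of compatible sizes, let c > 0, and let vectors p, q, q′, ν satisfy the first-order condition ∇G(q′) = Bᵀ[ν + c(A p − B q′)]. Then L_c(p, q, ν) − L_c(p, q′, ν) ≥ (c/2) ‖B q − B q′‖² − (σ_G/2) ‖q − q′‖². -/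
open scoped RealInnerProductSpace

/-- Let `G` be a differentiable `σ_G`-weakly convex function, `A, B`
matrices (linear maps) of compatible sizes, `c > 0`, and suppose `p, q, q', ν` satisfy the
first-order condition `∇G(q') = Bᵀ (ν + c (A p - B q'))`. Then
`L_c(p, q, ν) - L_c(p, q', ν) ≥ (c/2) ‖B q - B q'‖² - (σ_G/2) ‖q - q'‖²`. -/
theorem augLag_decrease_q_update {E E₂ H : Type*}
    [NormedAddCommGroup E] [InnerProductSpace ℝ E]
    [NormedAddCommGroup E₂] [InnerProductSpace ℝ E₂] [CompleteSpace E₂]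
    [NormedAddCommGroup H] [InnerProductSpace ℝ H]
    (F : E → ℝ)
    (G : E₂ → ℝ) (gradG : E₂ → E₂) (hGdiff : ∀ x, HasGradientAt G (gradG x) x)
    (σG : ℝ)
    (hGwc : ∀ x y, G y ≥ G x + ⟪gradG x, y - x⟫ - σG / 2 * ‖y - x‖ ^ 2)
    (A : E →L[ℝ] H)
    (B : E₂ →L[ℝ] H) (Bt : H →L[ℝ] E₂)
    (hBt : ∀ (x : E₂) (ξ : H), ⟪B x, ξ⟫ = ⟪x, Bt ξ⟫)
    (c : ℝ) (hc : 0 < c) (p : E) (q q' : E₂) (ν : H)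
    (hmin : gradG q' = Bt (ν + c • (A p - B q'))) :
    augLag F G A B c p q ν - augLag F G A B c p q' ν ≥
      c / 2 * ‖B q - B q'‖ ^ 2 - σG / 2 * ‖q - q'‖ ^ 2 := by
  have h1 := hGwc q' q
  rw [hmin, real_inner_comm, ← hBt, map_sub, inner_add_right, inner_smul_right] at h1
  have h2 : A p - B q = (A p - B q') - (B q - B q') := by abel
  have h3 := norm_sub_sq_real (A p - B q') (B q - B q')
  have h4 : ⟪ν, A p - B q⟫ = ⟪ν, A p - B q'⟫ - ⟪B q - B q', ν⟫ := by
    rw [h2, inner_sub_right, real_inner_comm ν (B q - B q')]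
  rw [← h2, real_inner_comm] at h3
  unfold augLag
  rw [h4, h3]
  linarith
end

section
/- (Sufficient decrease for the first DRS scheme.) Let F: ℝⁿ → ℝ be differentiable, σ_F-strongly convex and L_p-smooth; let G be differentiable and ω_G-restricted weakly convex with respect to B; let A be an n×n symmetric positive definite matrix with smallest eigenvalue μ_A > 0; let c > 0 and 0 < α ≤ 2. Suppose the points p^k, p^{k+1}, q^k, q^{k+1}, ν^k, ν^{k+1}, ν_{1/2}^{k+1} satisfy the first-order optimality conditions of the first DRS scheme at step k, together with ∇F(p^k) = −Aᵀ ν^k. Then L_c(p^k, q^k, ν^k) − L_c(p^{k+1}, q^{k+1}, ν^{k+1}) ≥ [σ_F/4 + c μ_A² (1/α − 1/2)] ‖p^k − p^{k+1}‖² + ((c − ω_G)/2) ‖B q^k − B q^{k+1}‖² + (σ_F μ_A²/(4 L_p²) − 1/(c α)) ‖ν^k − ν^{k+1}‖². -/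
open scoped RealInnerProductSpace

/-- (Sufficient decrease for the first DRS scheme.) Let `F` be
differentiable, `σ_F`-strongly convex and `L_p`-smooth; `G` differentiable and
`ω_G`-restricted weakly convex w.r.t. `B`; `A` symmetric positive definite with smallest
eigenvalue `μ_A > 0`; `c > 0`, `0 < α ≤ 2`. If the points satisfy the first-order
optimality conditions of the first DRS scheme at step `k` together with
`∇F(pᵏ) = -Aᵀ νᵏ`, then
`L_c(pᵏ, qᵏ, νᵏ) - L_c(pᵏ⁺¹, qᵏ⁺¹, νᵏ⁺¹) ≥
  [σ_F/4 + c μ_A² (1/α - 1/2)] ‖pᵏ - pᵏ⁺¹‖² + ((c - ω_G)/2) ‖B qᵏ - B qᵏ⁺¹‖²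
  + (σ_F μ_A²/(4 L_p²) - 1/(c α)) ‖νᵏ - νᵏ⁺¹‖²`. -/
theorem sufficient_decrease_first_drs {E E₂ : Type*}
    [NormedAddCommGroup E] [InnerProductSpace ℝ E] [CompleteSpace E]
    [NormedAddCommGroup E₂] [InnerProductSpace ℝ E₂] [CompleteSpace E₂]
    (F : E → ℝ) (gradF : E → E) (hFdiff : ∀ x, HasGradientAt F (gradF x) x)
    (σF Lp : ℝ) (hσF : 0 < σF) (hLp : 0 < Lp)
    (hFsc : ∀ x y, F y ≥ F x + ⟪gradF x, y - x⟫ + σF / 2 * ‖y - x‖ ^ 2)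
    (hFsmooth : ∀ x y, ‖gradF x - gradF y‖ ≤ Lp * ‖x - y‖)
    (G : E₂ → ℝ) (gradG : E₂ → E₂) (hGdiff : ∀ x, HasGradientAt G (gradG x) x)
    (ωG : ℝ)
    (B : E₂ →L[ℝ] E) (Bt : E →L[ℝ] E₂)
    (hBt : ∀ (x : E₂) (ξ : E), ⟪B x, ξ⟫ = ⟪x, Bt ξ⟫)
    (hGrwc : ∀ x y, G y ≥ G x + ⟪gradG x, y - x⟫ - ωG / 2 * ‖B y - B x‖ ^ 2)
    (A : E →L[ℝ] E) (hAsym : ∀ x y, ⟪A x, y⟫ = ⟪x, A y⟫)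
    (μA : ℝ) (hμA : 0 < μA) (hAlb : ∀ x, μA * ‖x‖ ^ 2 ≤ ⟪A x, x⟫)
    (c α : ℝ) (hc : 0 < c) (hα0 : 0 < α) (hα2 : α ≤ 2)
    (pk pk1 : E) (qk qk1 : E₂) (νk νk1 νh : E)
    (hrelax : νh = νk - ((1 - α) * c) • (A pk - B qk))
    (hpmin : gradF pk1 = -(A νk1))
    (hdual : νk1 = νh + c • (A pk1 - B qk))
    (hqmin : gradG qk1 = Bt (νk1 + c • (A pk1 - B qk1)))
    (hprev : gradF pk = -(A νk)) :
    augLag F G A B c pk qk νk - augLag F G A B c pk1 qk1 νk1 ≥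
      (σF / 4 + c * μA ^ 2 * (1 / α - 1 / 2)) * ‖pk - pk1‖ ^ 2
      + ((c - ωG) / 2) * ‖B qk - B qk1‖ ^ 2
      + (σF * μA ^ 2 / (4 * Lp ^ 2) - 1 / (c * α)) * ‖νk - νk1‖ ^ 2 := by
  have hnorm : ∀ x, μA * ‖x‖ ≤ ‖A x‖ := by
    intro x
    have h1 := hAlb x
    have h2 := real_inner_le_norm (A x) x
    rcases (norm_nonneg x).eq_or_lt with h | h
    · rw [← h]; simp
    · nlinarith
  have hF := hFsc pk1 pk
  have hG := hGrwc qk1 qk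
  rw [hpmin, inner_neg_left, hAsym, map_sub] at hF
  rw [hqmin, real_inner_comm, ← hBt, map_sub, real_inner_comm] at hG
  have hd := hnorm (pk - pk1)
  have hn := hnorm (νk - νk1)
  have hs := hFsmooth pk pk1
  have e : gradF pk - gradF pk1 = -(A (νk - νk1)) := by
    rw [hprev, hpmin, map_sub]; abel
  rw [e, norm_neg] at hs
  rw [map_sub] at hd
  have hnd : μA * ‖νk - νk1‖ ≤ Lp * ‖pk - pk1‖ := hn.trans hs
  have hnd2 : μA ^ 2 * ‖νk - νk1‖ ^ 2 ≤ Lp ^ 2 * ‖pk - pk1‖ ^ 2 := by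
    rw [← mul_pow, ← mul_pow]
    exact pow_le_pow_left₀ (by positivity) hnd 2
  have hd2 : μA ^ 2 * ‖pk - pk1‖ ^ 2 ≤ ‖A pk - A pk1‖ ^ 2 := by
    rw [← mul_pow]
    exact pow_le_pow_left₀ (by positivity) hd 2
  have k1 : σF * μA ^ 2 / (4 * Lp ^ 2) * ‖νk - νk1‖ ^ 2 ≤ σF / 4 * ‖pk - pk1‖ ^ 2 := by
    rw [div_mul_eq_mul_div, div_le_iff₀ (by positivity)]
    nlinarith
  have hα : 0 ≤ 1 / α - 1 / 2 := by
    have := one_div_le_one_div_of_le hα0 hα2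
    linarith
  have k2 : c * μA ^ 2 * (1 / α - 1 / 2) * ‖pk - pk1‖ ^ 2
      ≤ c * (1 / α - 1 / 2) * ‖A pk - A pk1‖ ^ 2 := by
    have := mul_le_mul_of_nonneg_left hd2 (mul_nonneg hc.le hα)
    linarith
  -- vector identity
  have hr : A pk - B qk = (1 / (α * c)) • ((νk1 - νk) + c • (A pk - A pk1)) := by
    have : (νk1 - νk) + c • (A pk - A pk1) = (α * c) • (A pk - B qk) := by
      rw [hdual, hrelax]; module
    rw [this, smul_smul, one_div_mul_cancel (by positivity), one_smul]
  have key : ⟪νk - νk1, A pk - B qk⟫ + c / 2 * (‖A pk - B qk‖ ^ 2 - ‖A pk1 - B qk‖ ^ 2)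
      = c * (1 / α - 1 / 2) * ‖A pk - A pk1‖ ^ 2 - 1 / (c * α) * ‖νk - νk1‖ ^ 2 := by
    have e1 : A pk1 - B qk = (A pk - B qk) - (A pk - A pk1) := by abel
    have e2 : νk1 - νk = -(νk - νk1) := by abel
    rw [e1, norm_sub_sq_real (A pk - B qk) (A pk - A pk1), hr, e2]
    generalize νk - νk1 = δ
    generalize A pk - A pk1 = d
    rw [sub_add, sub_sub_cancel]
    simp only [inner_smul_left, inner_smul_right, inner_add_left, inner_add_right,
      inner_neg_left, inner_neg_right, real_inner_self_eq_norm_sq, real_inner_comm d δ]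
    simp only [conj_trivial]
    field_simp
    ring
  have key2 : ⟪νk1 + c • (A pk1 - B qk1), B qk - B qk1⟫ - ⟪νk1, A pk - A pk1⟫
      + ⟪νk, A pk - B qk⟫ + c / 2 * ‖A pk - B qk‖ ^ 2
      - ⟪νk1, A pk1 - B qk1⟫ - c / 2 * ‖A pk1 - B qk1‖ ^ 2
      = ⟪νk - νk1, A pk - B qk⟫ + c / 2 * (‖A pk - B qk‖ ^ 2 - ‖A pk1 - B qk‖ ^ 2)
        + c / 2 * ‖B qk - B qk1‖ ^ 2 := by
    have e1 : A pk1 - B qk = (A pk1 - B qk1) - (B qk - B qk1) := by abel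
    rw [e1, norm_sub_sq_real (A pk1 - B qk1)]
    simp only [inner_smul_left, inner_add_left, inner_sub_left, inner_sub_right]
    simp only [conj_trivial]
    ring
  unfold augLag
  linarith
end

section
/- (Sufficient decrease for the second DRS scheme.) Let F be differentiable and convex, let G be differentiable and σ_G-weakly convex, let A and B be real matrices of compatible sizes, and let c > 0, α > 0. Suppose the points p^k, p^{k+1}, q^k, q^{k+1}, ν^k, ν^{k+1}, ν_{1/2}^{k+1} satisfy the first-order optimality conditions of the second DRS scheme at step k. Then L_c(p^k, q^k, ν^k) − L_c(p^{k+1}, q^{k+1}, ν^{k+1}) ≥ (c/2) ‖A p^k − A p^{k+1}‖² − (σ_G/2) ‖q^k − q^{k+1}‖² + c(1/α − 1/2) ‖B q^k − B q^{k+1}‖² − (1/(α c)) ‖ν^k − ν^{k+1}‖². -/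
open scoped RealInnerProductSpace

/-- (Sufficient decrease for the second DRS scheme.) Let `F` be
differentiable and convex, `G` differentiable and `σ_G`-weakly convex, `A, B` matrices
(linear maps) of compatible sizes, `c > 0`, `α > 0`. If the points satisfy the
first-order optimality conditions of the second DRS scheme at step `k`, then
`L_c(pᵏ, qᵏ, νᵏ) - L_c(pᵏ⁺¹, qᵏ⁺¹, νᵏ⁺¹) ≥
  (c/2) ‖A pᵏ - A pᵏ⁺¹‖² - (σ_G/2) ‖qᵏ - qᵏ⁺¹‖²
  + c (1/α - 1/2) ‖B qᵏ - B qᵏ⁺¹‖² - (1/(α c)) ‖νᵏ - νᵏ⁺¹‖²`. -/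
theorem sufficient_decrease_second_drs {E E₂ H : Type*}
    [NormedAddCommGroup E] [InnerProductSpace ℝ E] [CompleteSpace E]
    [NormedAddCommGroup E₂] [InnerProductSpace ℝ E₂] [CompleteSpace E₂]
    [NormedAddCommGroup H] [InnerProductSpace ℝ H]
    (F : E → ℝ) (gradF : E → E) (hFdiff : ∀ x, HasGradientAt F (gradF x) x)
    (hFconv : ∀ x y, F y ≥ F x + ⟪gradF x, y - x⟫)
    (G : E₂ → ℝ) (gradG : E₂ → E₂) (hGdiff : ∀ x, HasGradientAt G (gradG x) x)
    (σG : ℝ)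
    (hGwc : ∀ x y, G y ≥ G x + ⟪gradG x, y - x⟫ - σG / 2 * ‖y - x‖ ^ 2)
    (A : E →L[ℝ] H) (At : H →L[ℝ] E)
    (hAt : ∀ (x : E) (ξ : H), ⟪A x, ξ⟫ = ⟪x, At ξ⟫)
    (B : E₂ →L[ℝ] H) (Bt : H →L[ℝ] E₂)
    (hBt : ∀ (x : E₂) (ξ : H), ⟪B x, ξ⟫ = ⟪x, Bt ξ⟫)
    (c α : ℝ) (hc : 0 < c) (hα : 0 < α)
    (pk pk1 : E) (qk qk1 : E₂) (νk νk1 νh : H)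
    (hpmin : gradF pk1 = -(At (νk + c • (A pk1 - B qk))))
    (hrelax : νh = νk - ((1 - α) * c) • (A pk1 - B qk))
    (hqmin : gradG qk1 = Bt νk1)
    (hdual : νk1 = νh + c • (A pk1 - B qk1)) :
    augLag F G A B c pk qk νk - augLag F G A B c pk1 qk1 νk1 ≥
      c / 2 * ‖A pk - A pk1‖ ^ 2 - σG / 2 * ‖qk - qk1‖ ^ 2
      + c * (1 / α - 1 / 2) * ‖B qk - B qk1‖ ^ 2
      - (1 / (α * c)) * ‖νk - νk1‖ ^ 2 := by
  have h1 := hFconv pk1 pk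
  have h2 := hGwc qk1 qk
  rw [hpmin, inner_neg_left, real_inner_comm, ← hAt, map_sub] at h1
  rw [hqmin, real_inner_comm, ← hBt, map_sub] at h2
  have key : ∀ (e u d ν : H),
      -⟪e, ν + c • u⟫ + ⟪d, ν + (α * c) • u + c • d⟫ + ⟪ν, e + u⟫
        - ⟪ν + (α * c) • u + c • d, u + d⟫
        + c / 2 * ‖e + u‖ ^ 2 - c / 2 * ‖u + d‖ ^ 2
      = c / 2 * ‖e‖ ^ 2 + c * (1 / α - 1 / 2) * ‖d‖ ^ 2
        - (1 / (α * c)) * ‖(α * c) • u + c • d‖ ^ 2 := by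
    intro e u d ν
    simp only [← real_inner_self_eq_norm_sq, inner_add_left, inner_add_right,
      real_inner_smul_left, real_inner_smul_right]
    rw [real_inner_comm e ν, real_inner_comm d ν, real_inner_comm d u, real_inner_comm e u]
    field_simp
    ring
  have hν : νk1 = νk + (α * c) • (A pk1 - B qk) + c • (B qk - B qk1) := by
    rw [hdual, hrelax]
    module
  have k := key (A pk - A pk1) (A pk1 - B qk) (B qk - B qk1) νk
  have e1 : A pk - A pk1 + (A pk1 - B qk) = A pk - B qk := by abel
  have e2 : A pk1 - B qk + (B qk - B qk1) = A pk1 - B qk1 := by abel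
  have e3 : ‖(α * c) • (A pk1 - B qk) + c • (B qk - B qk1)‖ = ‖νk - νk1‖ := by
    rw [norm_sub_rev νk νk1, hν]
    congr 1
    abel
  rw [← hν, e1, e2, e3] at k
  unfold augLag
  linarith
end

section
/- (Sufficient decrease for the second DRS scheme under a sub-minimization-path bound.) Let F be differentiable and convex; let G be differentiable, σ_G-weakly convex and L_q-smooth; let A be symmetric positive definite with smallest eigenvalue μ_A > 0; let B have full row rank, and let μ_{BBᵀ} > 0 be the smallest eigenvalue of B Bᵀ; let c > 0, 0 < α ≤ 2 and M_q > 0. Suppose the points p^k, p^{k+1}, q^k, q^{k+1}, ν^k, ν^{k+1}, ν_{1/2}^{k+1} satisfy the first-order optimality conditions of the second DRS scheme at step k, that additionally ∇G(q^k) = Bᵀ ν^k, and that ‖q^k − q^{k+1}‖ ≤ M_q ‖B q^k − B q^{k+1}‖. Then L_c(p^k, q^k, ν^k) − L_c(p^{k+1}, q^{k+1}, ν^{k+1}) ≥ (c μ_A²/2) ‖p^k − p^{k+1}‖² + [ (c/M_q²)(1/α − 1/2) − σ_G/2 − L_q²/(α c μ_{BBᵀ}) ] ‖q^k − q^{k+1}‖².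 -/
open scoped RealInnerProductSpace

/-- (Sufficient decrease for the second DRS scheme under a
sub-minimization-path bound.) Let `F` be differentiable and convex; `G` differentiable,
`σ_G`-weakly convex and `L_q`-smooth; `A` symmetric positive definite with smallest
eigenvalue `μ_A > 0`; `B` of full row rank with `μ_{BBᵀ} > 0` the smallest eigenvalue of
`B Bᵀ`; `c > 0`, `0 < α ≤ 2`, `M_q > 0`. If the points satisfy the first-order optimality
conditions of the second DRS scheme at step `k`, together with `∇G(qᵏ) = Bᵀ νᵏ` and
`‖qᵏ - qᵏ⁺¹‖ ≤ M_q ‖B qᵏ - B qᵏ⁺¹‖`, then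
`L_c(pᵏ, qᵏ, νᵏ) - L_c(pᵏ⁺¹, qᵏ⁺¹, νᵏ⁺¹) ≥ (c μ_A²/2) ‖pᵏ - pᵏ⁺¹‖²
  + [(c/M_q²)(1/α - 1/2) - σ_G/2 - L_q²/(α c μ_{BBᵀ})] ‖qᵏ - qᵏ⁺¹‖²`. -/
theorem sufficient_decrease_second_drs_subminpath {E E₂ : Type*}
    [NormedAddCommGroup E] [InnerProductSpace ℝ E] [CompleteSpace E]
    [NormedAddCommGroup E₂] [InnerProductSpace ℝ E₂] [CompleteSpace E₂]
    (F : E → ℝ) (gradF : E → E) (hFdiff : ∀ x, HasGradientAt F (gradF x) x)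
    (hFconv : ∀ x y, F y ≥ F x + ⟪gradF x, y - x⟫)
    (G : E₂ → ℝ) (gradG : E₂ → E₂) (hGdiff : ∀ x, HasGradientAt G (gradG x) x)
    (σG Lq : ℝ)
    (hGwc : ∀ x y, G y ≥ G x + ⟪gradG x, y - x⟫ - σG / 2 * ‖y - x‖ ^ 2)
    (hGsmooth : ∀ x y, ‖gradG x - gradG y‖ ≤ Lq * ‖x - y‖)
    (A : E →L[ℝ] E) (hAsym : ∀ x y, ⟪A x, y⟫ = ⟪x, A y⟫)
    (μA : ℝ) (hμA : 0 < μA) (hAlb : ∀ x, μA * ‖x‖ ^ 2 ≤ ⟪A x, x⟫)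
    (B : E₂ →L[ℝ] E) (Bt : E →L[ℝ] E₂)
    (hBt : ∀ (x : E₂) (ξ : E), ⟪B x, ξ⟫ = ⟪x, Bt ξ⟫)
    (hBsurj : Function.Surjective B)
    (μBBt : ℝ) (hμBBt : 0 < μBBt)
    (hBBtlb : ∀ ξ : E, μBBt * ‖ξ‖ ^ 2 ≤ ⟪B (Bt ξ), ξ⟫)
    (c α Mq : ℝ) (hc : 0 < c) (hα0 : 0 < α) (hα2 : α ≤ 2) (hMq : 0 < Mq)
    (pk pk1 : E) (qk qk1 : E₂) (νk νk1 νh : E)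
    (hpmin : gradF pk1 = -(A (νk + c • (A pk1 - B qk))))
    (hrelax : νh = νk - ((1 - α) * c) • (A pk1 - B qk))
    (hqmin : gradG qk1 = Bt νk1)
    (hdual : νk1 = νh + c • (A pk1 - B qk1))
    (hprev : gradG qk = Bt νk)
    (hsubmin : ‖qk - qk1‖ ≤ Mq * ‖B qk - B qk1‖) :
    augLag F G A B c pk qk νk - augLag F G A B c pk1 qk1 νk1 ≥
      (c * μA ^ 2 / 2) * ‖pk - pk1‖ ^ 2
      + ((c / Mq ^ 2) * (1 / α - 1 / 2) - σG / 2 - Lq ^ 2 / (α * c * μBBt)) *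
          ‖qk - qk1‖ ^ 2 := by
  have h1 := hFconv pk1 pk
  have h2 := hGwc qk1 qk
  rw [hpmin, inner_neg_left, hAsym, map_sub] at h1
  rw [hqmin, real_inner_comm, ← hBt, map_sub, real_inner_comm] at h2
  have hA : μA ^ 2 * ‖pk - pk1‖ ^ 2 ≤ ‖A pk - A pk1‖ ^ 2 := by
    have h3 := hAlb (pk - pk1)
    have h4 := real_inner_le_norm (A (pk - pk1)) (pk - pk1)
    have h5 : μA * ‖pk - pk1‖ ≤ ‖A (pk - pk1)‖ := by
      rcases (norm_nonneg (pk - pk1)).eq_or_lt with h | h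
      · rw [← h]; simp
      · refine le_of_mul_le_mul_right ?_ h
        nlinarith
    rw [map_sub] at h5
    have h6 : 0 ≤ μA * ‖pk - pk1‖ := by positivity
    rw [← mul_pow]
    exact pow_le_pow_left₀ h6 h5 2
  have hD : μBBt * ‖νk - νk1‖ ^ 2 ≤ Lq ^ 2 * ‖qk - qk1‖ ^ 2 := by
    have h3 := hBBtlb (νk - νk1)
    rw [hBt, real_inner_self_eq_norm_sq, map_sub, ← hqmin, ← hprev] at h3
    have h4 := pow_le_pow_left₀ (norm_nonneg _) (hGsmooth qk qk1) 2
    rw [mul_pow] at h4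
    linarith
  have hM : ‖qk - qk1‖ ^ 2 ≤ Mq ^ 2 * ‖B qk - B qk1‖ ^ 2 := by
    rw [← mul_pow]
    exact pow_le_pow_left₀ (norm_nonneg _) hsubmin 2
  have hM' : c / Mq ^ 2 * (1 / α - 1 / 2) * ‖qk - qk1‖ ^ 2
      ≤ c * (1 / α - 1 / 2) * ‖B qk - B qk1‖ ^ 2 := by
    have h3 : 0 ≤ 1 / α - 1 / 2 := by
      rw [sub_nonneg]; exact one_div_le_one_div_of_le hα0 hα2
    have h4 : 0 ≤ c / Mq ^ 2 * (1 / α - 1 / 2) := by positivity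
    have h5 := mul_le_mul_of_nonneg_left hM h4
    refine h5.trans (le_of_eq ?_)
    field_simp
  have hD' : ‖νk - νk1‖ ^ 2 / (α * c) ≤ Lq ^ 2 / (α * c * μBBt) * ‖qk - qk1‖ ^ 2 := by
    rw [div_mul_eq_mul_div, div_le_div_iff₀ (by positivity) (by positivity)]
    have h3 : 0 ≤ α * c := by positivity
    nlinarith [mul_le_mul_of_nonneg_left hD h3]
  have hA' := mul_le_mul_of_nonneg_left hA (by positivity : 0 ≤ c / 2)
  -- vectors
  obtain ⟨r, hr⟩ : ∃ r, r = A pk1 - B qk := ⟨_, rfl⟩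
  obtain ⟨d, hd⟩ : ∃ d, d = B qk - B qk1 := ⟨_, rfl⟩
  obtain ⟨a, ha⟩ : ∃ a, a = A pk - A pk1 := ⟨_, rfl⟩
  have e1 : A pk - B qk = a + r := by rw [ha, hr]; abel
  have e2 : A pk1 - B qk1 = r + d := by rw [hd, hr]; abel
  have e3 : νk1 = νk + (α * c) • r + c • d := by
    rw [hdual, hrelax, e2, ← hr]; module
  have e4 : ‖νk - νk1‖ ^ 2 / (α * c) = α * c * ‖r‖ ^ 2 + 2 * c * ⟪r, d⟫ + c / α * ‖d‖ ^ 2 := by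
    have : νk - νk1 = -((α * c) • r + c • d) := by rw [e3]; abel
    rw [this, norm_neg, norm_add_sq_real, norm_smul, norm_smul, real_inner_smul_left,
      real_inner_smul_right, mul_pow, mul_pow, Real.norm_eq_abs, Real.norm_eq_abs, sq_abs, sq_abs]
    field_simp
  rw [e4] at hD'
  unfold augLag
  rw [e1, e2]
  rw [← hr, ← ha] at h1
  rw [← hd] at h2 hM'
  rw [← ha] at hA'
  rw [e3] at h2 ⊢
  simp only [inner_add_left, inner_add_right, real_inner_smul_left, norm_add_sq_real,
    real_inner_self_eq_norm_sq] at h1 h2 ⊢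
  have c1 := real_inner_comm r a
  have c2 := real_inner_comm r d
  have e5 : c * (1 / α - 1 / 2) * ‖d‖ ^ 2 = c / α * ‖d‖ ^ 2 - c / 2 * ‖d‖ ^ 2 := by ring
  rw [e5] at hM'
  simp only [c1, c2] at *
  nlinarith
end

section
/- Let F be differentiable and σ_F-strongly convex; let G be differentiable and ω_G-restricted weakly convex with respect to B; let A be an n×n symmetric positive definite matrix with smallest eigenvalue μ_A > 0 and largest eigenvalue λ_A; let c > 0. Let (p*, q*, ν*) be a stationary triple: A p* = B q*, ∇F(p*) = −Aᵀ ν*, ∇G(q*) = Bᵀ ν*. Let (p′, q′, ν′) satisfy ∇F(p′) = −Aᵀ ν′ and ∇G(q′) = Bᵀ[ν′ + c(A p′ − B q′)]. Then: (i) L_c(p′, q′, ν′) − L_c(p*, q*, ν*) ≤ ((c λ_A² − σ_F)/2) ‖p′ − p*‖² − ((c − ω_G)/2) ‖B q′ − B q*‖²; and (ii) ‖∇L_c(p′, q′, ν′)‖² ≥ (c² μ_A² + 1) ‖A p′ − B q′‖², where ∇L_c is the full gradient of L_c in (p, q, ν). -/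
open scoped RealInnerProductSpace

/-- Let `F` be differentiable and `σ_F`-strongly convex; `G`
differentiable and `ω_G`-restricted weakly convex w.r.t. `B`; `A` symmetric positive
definite with smallest eigenvalue `μ_A > 0` and largest eigenvalue `λ_A`; `c > 0`.
Let `(p*, q*, ν*)` be stationary (`A p* = B q*`, `∇F(p*) = -Aᵀ ν*`, `∇G(q*) = Bᵀ ν*`)
and let `(p', q', ν')` satisfy `∇F(p') = -Aᵀ ν'` and
`∇G(q') = Bᵀ[ν' + c (A p' - B q')]`. Then
(i) `L_c(p', q', ν') - L_c(p*, q*, ν*) ≤ ((c λ_A² - σ_F)/2) ‖p' - p*‖²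
      - ((c - ω_G)/2) ‖B q' - B q*‖²`, and
(ii) `‖∇L_c(p', q', ν')‖² ≥ (c² μ_A² + 1) ‖A p' - B q'‖²`, where the full gradient of
`L_c` in `(p, q, ν)` has components `∇F(p') + Aᵀ[ν' + c (A p' - B q')]`,
`∇G(q') - Bᵀ[ν' + c (A p' - B q')]`, and `A p' - B q'`. -/
theorem augLag_value_gap_and_gradient_bound_first {E E₂ : Type*}
    [NormedAddCommGroup E] [InnerProductSpace ℝ E] [CompleteSpace E]
    [NormedAddCommGroup E₂] [InnerProductSpace ℝ E₂] [CompleteSpace E₂]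
    (F : E → ℝ) (gradF : E → E) (hFdiff : ∀ x, HasGradientAt F (gradF x) x)
    (σF : ℝ) (hσF : 0 < σF)
    (hFsc : ∀ x y, F y ≥ F x + ⟪gradF x, y - x⟫ + σF / 2 * ‖y - x‖ ^ 2)
    (G : E₂ → ℝ) (gradG : E₂ → E₂) (hGdiff : ∀ x, HasGradientAt G (gradG x) x)
    (ωG : ℝ)
    (B : E₂ →L[ℝ] E) (Bt : E →L[ℝ] E₂)
    (hBt : ∀ (x : E₂) (ξ : E), ⟪B x, ξ⟫ = ⟪x, Bt ξ⟫)
    (hGrwc : ∀ x y, G y ≥ G x + ⟪gradG x, y - x⟫ - ωG / 2 * ‖B y - B x‖ ^ 2)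
    (A : E →L[ℝ] E) (hAsym : ∀ x y, ⟪A x, y⟫ = ⟪x, A y⟫)
    (μA lamA : ℝ) (hμA : 0 < μA)
    (hAlb : ∀ x, μA * ‖x‖ ^ 2 ≤ ⟪A x, x⟫) (hAub : ∀ x, ‖A x‖ ≤ lamA * ‖x‖)
    (c : ℝ) (hc : 0 < c)
    (pstar : E) (qstar : E₂) (νstar : E)
    (hsta1 : A pstar = B qstar)
    (hsta2 : gradF pstar = -(A νstar))
    (hsta3 : gradG qstar = Bt νstar)
    (p' : E) (q' : E₂) (ν' : E)
    (hp' : gradF p' = -(A ν'))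
    (hq' : gradG q' = Bt (ν' + c • (A p' - B q'))) :
    (augLag F G A B c p' q' ν' - augLag F G A B c pstar qstar νstar ≤
        ((c * lamA ^ 2 - σF) / 2) * ‖p' - pstar‖ ^ 2
        - ((c - ωG) / 2) * ‖B q' - B qstar‖ ^ 2) ∧
    (‖gradF p' + A (ν' + c • (A p' - B q'))‖ ^ 2
        + ‖gradG q' - Bt (ν' + c • (A p' - B q'))‖ ^ 2
        + ‖A p' - B q'‖ ^ 2 ≥
      (c ^ 2 * μA ^ 2 + 1) * ‖A p' - B q'‖ ^ 2) := by
  constructor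
  · have h1 := hFsc p' pstar
    have h2 := hGrwc q' qstar
    obtain ⟨a, ha⟩ : ∃ a, a = A p' - A pstar := ⟨_, rfl⟩
    obtain ⟨b, hb⟩ : ∃ b, b = B q' - B qstar := ⟨_, rfl⟩
    have hr : A p' - B q' = a - b := by rw [ha, hb, hsta1]; abel
    have e1 : ⟪gradF p', pstar - p'⟫ = ⟪ν', a⟫ := by
      rw [hp', inner_neg_left, hAsym, map_sub, ha, ← inner_neg_right, neg_sub]
    have e2 : ⟪gradG q', qstar - q'⟫ = -⟪ν' + c • (a - b), b⟫ := by
      rw [hq', hr, real_inner_comm, ← hBt, map_sub, real_inner_comm, hb, ← inner_neg_right,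
        neg_sub]
    have e3 : ‖a‖ ^ 2 ≤ lamA ^ 2 * ‖p' - pstar‖ ^ 2 := by
      have h := hAub (p' - pstar)
      rw [map_sub, ← ha] at h
      rw [← mul_pow]
      exact pow_le_pow_left₀ (norm_nonneg _) h 2
    have e4 : ‖a - b‖ ^ 2 = ‖a‖ ^ 2 - 2 * ⟪a, b⟫ + ‖b‖ ^ 2 := norm_sub_sq_real a b
    have e5 : ⟪ν' + c • (a - b), b⟫ = ⟪ν', b⟫ + c * (⟪a, b⟫ - ‖b‖ ^ 2) := by
      rw [inner_add_left, real_inner_smul_left, inner_sub_left, real_inner_self_eq_norm_sq]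
    have e6 := mul_le_mul_of_nonneg_left e3 hc.le
    rw [e1, norm_sub_rev] at h1
    rw [e2, e5, norm_sub_rev, ← hb] at h2
    unfold augLag
    rw [hr, hsta1, sub_self, ← hb, e4, inner_sub_right, inner_zero_right, norm_zero]
    nlinarith
  · have hg : gradF p' + A (ν' + c • (A p' - B q')) = c • A (A p' - B q') := by
      rw [hp', map_add, map_smul]; abel
    rw [hg]
    generalize A p' - B q' = r
    have h1 : μA * ‖r‖ ≤ ‖A r‖ := by
      rcases (norm_nonneg r).eq_or_lt with h | h
      · rw [← h]; simp
      · have := (hAlb r).trans (real_inner_le_norm _ _)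
        nlinarith
    have h2 : (μA * ‖r‖) ^ 2 ≤ ‖A r‖ ^ 2 := pow_le_pow_left₀ (by positivity) h1 2
    have h3 := mul_le_mul_of_nonneg_left h2 (sq_nonneg c)
    have h4 : ‖c • A r‖ ^ 2 = c ^ 2 * ‖A r‖ ^ 2 := by
      rw [norm_smul, mul_pow, Real.norm_eq_abs, sq_abs]
    rw [h4]
    have h5 := sq_nonneg ‖gradG q' - Bt (ν' + c • r)‖
    nlinarith
end

section
/- Let F be differentiable and convex; let G be differentiable, σ_G-weakly convex and L_q-smooth; let c > 0 and α > 0. Let (p*, q*, ν*) satisfy A p* = B q*, and suppose the iterates p^{k+1}, q^k, q^{k+1}, ν^k, ν^{k+1}, ν_{1/2}^{k+1} satisfy the first-order optimality conditions of the second DRS scheme at step k. Then: (i) L_c(p^{k+1}, q^{k+1}, ν^{k+1}) − L_c(p*, q*, ν*) ≤ c ‖A p^{k+1} − B q^{k+1}‖² + (σ_G/2) ‖q^{k+1} − q*‖² − (c/2) ‖B q^{k+1} − B q*‖² + (c(2 − α)/2) ‖B q^k − B q*‖² − (c(2 − α)/2) ‖A p^{k+1} − B q^k‖² + (c(α − 1)/2)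 ‖A p^{k+1} − A p*‖². (ii) If additionally ∇G(q^k) = Bᵀ ν^k and A Aᵀ is positive definite with smallest eigenvalue μ_{AAᵀ} > 0, then ‖∇L_c(p^{k+1}, q^{k+1}, ν^{k+1})‖² ≥ μ_{AAᵀ} [ ‖ν^k − ν^{k+1}‖² + c² ‖B q^k − B q^{k+1}‖² − 2 c L_q ‖q^k − q^{k+1}‖² ]. -/
open scoped RealInnerProductSpace

/-- Let `F` be differentiable and convex; `G` differentiable,
`σ_G`-weakly convex and `L_q`-smooth; `c > 0`, `α > 0`. Let `(p*, q*, ν*)` satisfy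
`A p* = B q*` and suppose the iterates satisfy the first-order optimality conditions of
the second DRS scheme at step `k`. Then
(i) the stated upper bound on `L_c(pᵏ⁺¹, qᵏ⁺¹, νᵏ⁺¹) - L_c(p*, q*, ν*)` holds, and
(ii) if additionally `∇G(qᵏ) = Bᵀ νᵏ` and `A Aᵀ` is positive definite with smallest
eigenvalue `μ_{AAᵀ} > 0`, then
`‖∇L_c(pᵏ⁺¹, qᵏ⁺¹, νᵏ⁺¹)‖² ≥ μ_{AAᵀ} [‖νᵏ - νᵏ⁺¹‖² + c² ‖B qᵏ - B qᵏ⁺¹‖²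
  - 2 c L_q ‖qᵏ - qᵏ⁺¹‖²]`, where the full gradient of `L_c` in `(p, q, ν)` has
components `∇F(p) + Aᵀ[ν + c (A p - B q)]`, `∇G(q) - Bᵀ[ν + c (A p - B q)]`, and
`A p - B q`. -/
theorem augLag_value_gap_and_gradient_bound_second {E E₂ H : Type*}
    [NormedAddCommGroup E] [InnerProductSpace ℝ E] [CompleteSpace E]
    [NormedAddCommGroup E₂] [InnerProductSpace ℝ E₂] [CompleteSpace E₂]
    [NormedAddCommGroup H] [InnerProductSpace ℝ H]
    (F : E → ℝ) (gradF : E → E) (hFdiff : ∀ x, HasGradientAt F (gradF x) x)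
    (hFconv : ∀ x y, F y ≥ F x + ⟪gradF x, y - x⟫)
    (G : E₂ → ℝ) (gradG : E₂ → E₂) (hGdiff : ∀ x, HasGradientAt G (gradG x) x)
    (σG Lq : ℝ)
    (hGwc : ∀ x y, G y ≥ G x + ⟪gradG x, y - x⟫ - σG / 2 * ‖y - x‖ ^ 2)
    (hGsmooth : ∀ x y, ‖gradG x - gradG y‖ ≤ Lq * ‖x - y‖)
    (A : E →L[ℝ] H) (At : H →L[ℝ] E)
    (hAt : ∀ (x : E) (ξ : H), ⟪A x, ξ⟫ = ⟪x, At ξ⟫)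
    (B : E₂ →L[ℝ] H) (Bt : H →L[ℝ] E₂)
    (hBt : ∀ (x : E₂) (ξ : H), ⟪B x, ξ⟫ = ⟪x, Bt ξ⟫)
    (c α : ℝ) (hc : 0 < c) (hα : 0 < α)
    (pstar : E) (qstar : E₂) (νstar : H)
    (hsta : A pstar = B qstar)
    (pk1 : E) (qk qk1 : E₂) (νk νk1 νh : H)
    (hpmin : gradF pk1 = -(At (νk + c • (A pk1 - B qk))))
    (hrelax : νh = νk - ((1 - α) * c) • (A pk1 - B qk))
    (hqmin : gradG qk1 = Bt νk1)
    (hdual : νk1 = νh + c • (A pk1 - B qk1)) :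
    (augLag F G A B c pk1 qk1 νk1 - augLag F G A B c pstar qstar νstar ≤
        c * ‖A pk1 - B qk1‖ ^ 2 + (σG / 2) * ‖qk1 - qstar‖ ^ 2
        - (c / 2) * ‖B qk1 - B qstar‖ ^ 2
        + (c * (2 - α) / 2) * ‖B qk - B qstar‖ ^ 2
        - (c * (2 - α) / 2) * ‖A pk1 - B qk‖ ^ 2
        + (c * (α - 1) / 2) * ‖A pk1 - A pstar‖ ^ 2) ∧
    (∀ μAAt : ℝ, 0 < μAAt →
      (∀ ξ : H, μAAt * ‖ξ‖ ^ 2 ≤ ⟪A (At ξ), ξ⟫) →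
      gradG qk = Bt νk →
      ‖gradF pk1 + At (νk1 + c • (A pk1 - B qk1))‖ ^ 2
        + ‖gradG qk1 - Bt (νk1 + c • (A pk1 - B qk1))‖ ^ 2
        + ‖A pk1 - B qk1‖ ^ 2 ≥
      μAAt * (‖νk - νk1‖ ^ 2 + c ^ 2 * ‖B qk - B qk1‖ ^ 2
        - 2 * c * Lq * ‖qk - qk1‖ ^ 2)) := by
  constructor
  · have h1 := hFconv pk1 pstar
    have h2 := hGwc qk1 qstar
    have e1 : ⟪gradF pk1, pstar - pk1⟫ = ⟪A pk1 - A pstar, νk + c • (A pk1 - B qk)⟫ := by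
      rw [← map_sub, hAt, hpmin, real_inner_comm, ← neg_sub pk1 pstar, inner_neg_neg]
    have e2 : ⟪gradG qk1, qstar - qk1⟫ = - ⟪B qk1 - B qstar, νk1⟫ := by
      rw [← map_sub, hBt, hqmin, real_inner_comm, ← neg_sub qk1 qstar, inner_neg_left]
    rw [norm_sub_rev] at h2
    unfold augLag
    rw [hsta] at *
    rw [e1] at h1
    rw [e2] at h2
    generalize hs : B qstar = s at *
    obtain ⟨a, ha⟩ : ∃ a, a = A pk1 - s := ⟨_, rfl⟩
    obtain ⟨b, hb⟩ : ∃ b, b = B qk - s := ⟨_, rfl⟩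
    obtain ⟨d, hd⟩ : ∃ d, d = B qk1 - s := ⟨_, rfl⟩
    have hab : A pk1 - B qk = a - b := by rw [ha, hb]; abel
    have had : A pk1 - B qk1 = a - d := by rw [ha, hd]; abel
    rw [hab] at h1 hrelax
    rw [had] at hdual
    rw [← ha] at h1
    rw [hab, had, ← ha, ← hb, ← hd]
    rw [← hd] at h2
    have key : ⟪νk1, a - d⟫ - ⟪a, νk + c • (a - b)⟫ + ⟪d, νk1⟫
        = c * ⟪a - d, a⟫ - (2 - α) * c * ⟪a - b, a⟫ := by
      rw [hdual, hrelax]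
      simp only [inner_add_left, inner_add_right, inner_sub_left, inner_sub_right,
        real_inner_smul_left, real_inner_smul_right]
      rw [real_inner_comm a νk, real_inner_comm d νk, real_inner_comm d a, real_inner_comm b a,
        real_inner_comm d b]
      ring
    have k1 : ‖a - (a - d)‖ ^ 2 = _ := norm_sub_sq_real a (a - d)
    have k2 : ‖a - (a - b)‖ ^ 2 = _ := norm_sub_sq_real a (a - b)
    rw [sub_sub_cancel, real_inner_comm] at k1 k2
    have k1' : ⟪a - d, a⟫ = (‖a - d‖ ^ 2 + ‖a‖ ^ 2 - ‖d‖ ^ 2) / 2 := by linarith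
    have k2' : ⟪a - b, a⟫ = (‖a - b‖ ^ 2 + ‖a‖ ^ 2 - ‖b‖ ^ 2) / 2 := by linarith
    rw [k1', k2'] at key
    simp only [sub_self, inner_zero_right, norm_zero]
    linarith
  · intro μ hμ hA hq
    have e : gradF pk1 + At (νk1 + c • (A pk1 - B qk1))
        = At ((νk1 - νk) + c • (B qk - B qk1)) := by
      rw [hpmin, ← map_neg, ← map_add]
      congr 1
      module
    have h1 := hA ((νk1 - νk) + c • (B qk - B qk1))
    rw [hAt, real_inner_self_eq_norm_sq] at h1
    rw [e]
    rw [norm_add_sq_real, norm_smul, mul_pow, Real.norm_eq_abs, sq_abs, real_inner_smul_right,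
      norm_sub_rev νk1 νk] at h1
    have h2 : - (Lq * ‖qk - qk1‖ ^ 2) ≤ ⟪νk1 - νk, B qk - B qk1⟫ := by
      rw [← map_sub, real_inner_comm, hBt, map_sub, ← hqmin, ← hq]
      have := neg_le_of_abs_le (abs_real_inner_le_norm (qk - qk1) (gradG qk1 - gradG qk))
      have h3 := hGsmooth qk1 qk
      rw [norm_sub_rev qk1 qk] at h3
      have h4 := mul_le_mul_of_nonneg_left h3 (norm_nonneg (qk - qk1))
      nlinarith
    have h5 := mul_le_mul_of_nonneg_left h2 (mul_pos hμ hc).le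
    have h6 := sq_nonneg ‖gradG qk1 - Bt (νk1 + c • (A pk1 - B qk1))‖
    have h7 := sq_nonneg ‖A pk1 - B qk1‖
    linarith
end

section
/- (Kurdyka–Łojasiewicz property with exponent 1/2 for the first DRS scheme.) Let F be differentiable and σ_F-strongly convex; let G be differentiable and ω_G-restricted weakly convex with respect to B; let A be symmetric positive definite with largest eigenvalue λ_A; and let c ≥ ω_G. Let (p*, q*, ν*) be a stationary triple: A p* = B q*, ∇F(p*) = −Aᵀ ν*, ∇G(q*) = Bᵀ ν*. Then for every ε > 0 and η > 0, setting C := (ε/η) · sqrt(max{0, (c λ_A² − σ_F)/2}), the following holds: for every triple (p′, q′, ν′) satisfying ∇F(p′) = −Aᵀ ν′ and ∇G(q′) = Bᵀ[ν′ + c(A p′ − B q′)], with ‖p′ − p*‖ ≤ ε, L_c(p′, q′, ν′) ≥ L_c(p*, q*, ν*), and ‖∇L_c(p′, q′, ν′)‖ ≥ η, one has (L_c(p′, q′, ν′) − L_c(p*, q*, ν*))^{1/2} ≤ C ‖∇L_c(p′, q′, ν′)‖. -/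
open scoped RealInnerProductSpace

/-- (Kurdyka–Łojasiewicz property with exponent `1/2` for the first DRS
scheme.) Let `F` be differentiable and `σ_F`-strongly convex; `G` differentiable and
`ω_G`-restricted weakly convex w.r.t. `B`; `A` symmetric positive definite with largest
eigenvalue `λ_A`; `c ≥ ω_G`. Let `(p*, q*, ν*)` be stationary. Then for every `ε > 0`
and `η > 0`, with `C := (ε/η) √(max 0 ((c λ_A² - σ_F)/2))`, every triple `(p', q', ν')`
satisfying `∇F(p') = -Aᵀ ν'` and `∇G(q') = Bᵀ[ν' + c (A p' - B q')]`, with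
`‖p' - p*‖ ≤ ε`, `L_c(p', q', ν') ≥ L_c(p*, q*, ν*)` and `‖∇L_c(p', q', ν')‖ ≥ η`,
satisfies `(L_c(p', q', ν') - L_c(p*, q*, ν*))^{1/2} ≤ C ‖∇L_c(p', q', ν')‖`. Here the
squared norm of the full gradient `∇L_c` is the sum of the squared norms of its three
components `∇F(p') + Aᵀ[ν' + c(A p' - B q')]`, `∇G(q') - Bᵀ[ν' + c(A p' - B q')]`, and
`A p' - B q'`. -/
theorem kl_exponent_half_first_drs {E E₂ : Type*}
    [NormedAddCommGroup E] [InnerProductSpace ℝ E] [CompleteSpace E]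
    [NormedAddCommGroup E₂] [InnerProductSpace ℝ E₂] [CompleteSpace E₂]
    (F : E → ℝ) (gradF : E → E) (hFdiff : ∀ x, HasGradientAt F (gradF x) x)
    (σF : ℝ) (hσF : 0 < σF)
    (hFsc : ∀ x y, F y ≥ F x + ⟪gradF x, y - x⟫ + σF / 2 * ‖y - x‖ ^ 2)
    (G : E₂ → ℝ) (gradG : E₂ → E₂) (hGdiff : ∀ x, HasGradientAt G (gradG x) x)
    (ωG : ℝ)
    (B : E₂ →L[ℝ] E) (Bt : E →L[ℝ] E₂)
    (hBt : ∀ (x : E₂) (ξ : E), ⟪B x, ξ⟫ = ⟪x, Bt ξ⟫)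
    (hGrwc : ∀ x y, G y ≥ G x + ⟪gradG x, y - x⟫ - ωG / 2 * ‖B y - B x‖ ^ 2)
    (A : E →L[ℝ] E) (hAsym : ∀ x y, ⟪A x, y⟫ = ⟪x, A y⟫)
    (μA lamA : ℝ) (hμA : 0 < μA)
    (hAlb : ∀ x, μA * ‖x‖ ^ 2 ≤ ⟪A x, x⟫) (hAub : ∀ x, ‖A x‖ ≤ lamA * ‖x‖)
    (c : ℝ) (hc : 0 < c) (hcω : ωG ≤ c)
    (pstar : E) (qstar : E₂) (νstar : E)
    (hsta1 : A pstar = B qstar)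
    (hsta2 : gradF pstar = -(A νstar))
    (hsta3 : gradG qstar = Bt νstar)
    (ε η : ℝ) (hε : 0 < ε) (hη : 0 < η) :
    ∀ (p' : E) (q' : E₂) (ν' : E),
      gradF p' = -(A ν') →
      gradG q' = Bt (ν' + c • (A p' - B q')) →
      ‖p' - pstar‖ ≤ ε →
      augLag F G A B c pstar qstar νstar ≤ augLag F G A B c p' q' ν' →
      η ≤ Real.sqrt (‖gradF p' + A (ν' + c • (A p' - B q'))‖ ^ 2
            + ‖gradG q' - Bt (ν' + c • (A p' - B q'))‖ ^ 2
            + ‖A p' - B q'‖ ^ 2) →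
      Real.sqrt (augLag F G A B c p' q' ν' - augLag F G A B c pstar qstar νstar) ≤
        ((ε / η) * Real.sqrt (max 0 ((c * lamA ^ 2 - σF) / 2))) *
          Real.sqrt (‖gradF p' + A (ν' + c • (A p' - B q'))‖ ^ 2
            + ‖gradG q' - Bt (ν' + c • (A p' - B q'))‖ ^ 2
            + ‖A p' - B q'‖ ^ 2) := by
  intro p' q' ν' h1 h2 h3 _ h5
  set N := Real.sqrt (‖gradF p' + A (ν' + c • (A p' - B q'))‖ ^ 2
            + ‖gradG q' - Bt (ν' + c • (A p' - B q'))‖ ^ 2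
            + ‖A p' - B q'‖ ^ 2) with hN
  have key : augLag F G A B c p' q' ν' - augLag F G A B c pstar qstar νstar
      ≤ (c * lamA ^ 2 - σF) / 2 * ‖pstar - p'‖ ^ 2 := by
    have a1 := hFsc p' pstar
    have a2 := hGrwc q' qstar
    rw [h1, inner_neg_left, hAsym] at a1
    rw [h2, real_inner_comm, ← hBt, real_inner_comm] at a2
    have a3 : ‖A (pstar - p')‖ ^ 2 ≤ lamA ^ 2 * ‖pstar - p'‖ ^ 2 := by
      rw [← mul_pow]
      exact pow_le_pow_left₀ (norm_nonneg _) (hAub _) 2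
    have a4 : ωG / 2 * ‖B qstar - B q'‖ ^ 2 ≤ c / 2 * ‖B qstar - B q'‖ ^ 2 := by
      gcongr
    have a5 : A (pstar - p') = B (qstar - q') - (A p' - B q') := by
      rw [map_sub, map_sub, hsta1]; abel
    have a6 : ‖A (pstar - p')‖ ^ 2 = ‖B (qstar - q')‖ ^ 2
        - 2 * ⟪B (qstar - q'), A p' - B q'⟫ + ‖A p' - B q'‖ ^ 2 := by
      rw [a5, norm_sub_sq_real]
    rw [← map_sub] at a2 a4
    rw [inner_add_left, real_inner_smul_left, real_inner_comm] at a2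
    rw [a5, inner_sub_right] at a1
    have a7 := mul_le_mul_of_nonneg_left a3 hc.le
    have a8 : ⟪A p' - B q', B (qstar - q')⟫ = ⟪B (qstar - q'), A p' - B q'⟫ :=
      real_inner_comm _ _
    have a9 : ⟪ν', B (qstar - q')⟫ = ⟪B (qstar - q'), ν'⟫ :=
      real_inner_comm _ _
    rw [a6] at a7
    simp only [augLag, hsta1, sub_self, inner_zero_right, norm_zero]
    nlinarith [a1, a2, a4, a7, a8, a9]
  have hd : ‖pstar - p'‖ ≤ ε := by rwa [norm_sub_rev]
  set M := max 0 ((c * lamA ^ 2 - σF) / 2) with hM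
  have hM0 : 0 ≤ M := le_max_left _ _
  have k2 : augLag F G A B c p' q' ν' - augLag F G A B c pstar qstar νstar ≤ ε ^ 2 * M := by
    refine key.trans ?_
    rw [mul_comm (ε ^ 2)]
    calc _ ≤ M * ‖pstar - p'‖ ^ 2 := by gcongr; exact le_max_right _ _
      _ ≤ _ := by gcongr
  have k3 : Real.sqrt (ε ^ 2 * M) = ε * Real.sqrt M := by
    rw [Real.sqrt_mul (sq_nonneg _), Real.sqrt_sq hε.le]
  have k4 : 1 ≤ N / η := (one_le_div hη).2 h5
  calc _ ≤ ε * Real.sqrt M := k3 ▸ Real.sqrt_le_sqrt k2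
    _ ≤ (ε * Real.sqrt M) * (N / η) := le_mul_of_one_le_right (by positivity) k4
    _ = _ := by ring
end

section
/- (Kurdyka–Łojasiewicz property with exponent 1/2 for the second DRS scheme.) Let F be differentiable and convex; let G be differentiable, σ_G-weakly convex and L_q-smooth; let B be symmetric positive definite with smallest eigenvalue μ_B > 0; let A have full row rank; let 0 < α < 2 and c > 2 L_q/μ_B². Let (p*, q*, ν*) be a stationary triple: A p* = B q*, ∇F(p*) = −Aᵀ ν*, ∇G(q*) = Bᵀ ν*. Then for every ε > 0 and η > 0 there exists a constant C > 0 such that: for all iterates p^{k+1}, q^k, q^{k+1}, ν^k, ν^{k+1}, ν_{1/2}^{k+1} satisfying the first-order optimality conditions of the second DRS scheme at step k together with ∇G(q^k) = Bᵀ ν^k, if ‖(A p^{k+1}, q^{k+1}, ν^{k+1}) − (A p*, q*, ν*)‖ ≤ ε, L_c(p^{k+1}, q^{k+1}, ν^{k+1}) ≥ L_c(p*, q*, ν*), and ‖∇L_c(p^{k+1}, q^{k+1}, ν^{k+1})‖ ≥ η, then (L_c(p^{k+1}, q^{k+1}, ν^{k+1}) − L_c(p*, q*, ν*))^{1/2}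 ≤ C ‖∇L_c(p^{k+1}, q^{k+1}, ν^{k+1})‖. -/
open scoped RealInnerProductSpace

set_option maxHeartbeats 2000000 in
/-- (Kurdyka–Łojasiewicz property with exponent `1/2` for the second
DRS scheme.) Let `F` be differentiable and convex; `G` differentiable, `σ_G`-weakly
convex and `L_q`-smooth; `B` symmetric positive definite with smallest eigenvalue
`μ_B > 0`; `A` of full row rank; `0 < α < 2` and `c > 2 L_q/μ_B²`. Let `(p*, q*, ν*)` be
stationary. Then for every `ε > 0`, `η > 0` there is `C > 0` such that: for all iterates
satisfying the first-order optimality conditions of the second DRS scheme at step `k`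
together with `∇G(qᵏ) = Bᵀ νᵏ`, if
`‖(A pᵏ⁺¹, qᵏ⁺¹, νᵏ⁺¹) - (A p*, q*, ν*)‖ ≤ ε`,
`L_c(pᵏ⁺¹, qᵏ⁺¹, νᵏ⁺¹) ≥ L_c(p*, q*, ν*)` and `‖∇L_c(pᵏ⁺¹, qᵏ⁺¹, νᵏ⁺¹)‖ ≥ η`, then
`(L_c(pᵏ⁺¹, qᵏ⁺¹, νᵏ⁺¹) - L_c(p*, q*, ν*))^{1/2} ≤ C ‖∇L_c(pᵏ⁺¹, qᵏ⁺¹, νᵏ⁺¹)‖`.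
Here the squared norm of the full gradient `∇L_c` is the sum of the squared norms of its
three components, and the norm of the collective point is the square root of the sum of
the squared norms of the components. -/
theorem kl_exponent_half_second_drs {E E₂ : Type*}
    [NormedAddCommGroup E] [InnerProductSpace ℝ E] [CompleteSpace E]
    [NormedAddCommGroup E₂] [InnerProductSpace ℝ E₂] [CompleteSpace E₂]
    (F : E → ℝ) (gradF : E → E) (hFdiff : ∀ x, HasGradientAt F (gradF x) x)
    (hFconv : ∀ x y, F y ≥ F x + ⟪gradF x, y - x⟫)
    (G : E₂ → ℝ) (gradG : E₂ → E₂) (hGdiff : ∀ x, HasGradientAt G (gradG x) x)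
    (σG Lq : ℝ)
    (hGwc : ∀ x y, G y ≥ G x + ⟪gradG x, y - x⟫ - σG / 2 * ‖y - x‖ ^ 2)
    (hGsmooth : ∀ x y, ‖gradG x - gradG y‖ ≤ Lq * ‖x - y‖)
    (B : E₂ →L[ℝ] E₂) (hBsym : ∀ x y, ⟪B x, y⟫ = ⟪x, B y⟫)
    (μB : ℝ) (hμB : 0 < μB) (hBlb : ∀ x, μB * ‖x‖ ^ 2 ≤ ⟪B x, x⟫)
    (A : E →L[ℝ] E₂) (At : E₂ →L[ℝ] E)
    (hAt : ∀ (x : E) (ξ : E₂), ⟪A x, ξ⟫ = ⟪x, At ξ⟫)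
    (hAsurj : Function.Surjective A)
    (α c : ℝ) (hα0 : 0 < α) (hα2 : α < 2) (hc : 2 * Lq / μB ^ 2 < c)
    (pstar : E) (qstar νstar : E₂)
    (hsta1 : A pstar = B qstar)
    (hsta2 : gradF pstar = -(At νstar))
    (hsta3 : gradG qstar = B νstar)
    (ε η : ℝ) (hε : 0 < ε) (hη : 0 < η) :
    ∃ C > 0, ∀ (pk1 : E) (qk qk1 νk νk1 νh : E₂),
      gradF pk1 = -(At (νk + c • (A pk1 - B qk))) →
      νh = νk - ((1 - α) * c) • (A pk1 - B qk) →
      gradG qk1 = B νk1 →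
      νk1 = νh + c • (A pk1 - B qk1) →
      gradG qk = B νk →
      Real.sqrt (‖A pk1 - A pstar‖ ^ 2 + ‖qk1 - qstar‖ ^ 2 + ‖νk1 - νstar‖ ^ 2) ≤ ε →
      augLag F G A B c pstar qstar νstar ≤ augLag F G A B c pk1 qk1 νk1 →
      η ≤ Real.sqrt (‖gradF pk1 + At (νk1 + c • (A pk1 - B qk1))‖ ^ 2
            + ‖gradG qk1 - B (νk1 + c • (A pk1 - B qk1))‖ ^ 2
            + ‖A pk1 - B qk1‖ ^ 2) →
      Real.sqrt (augLag F G A B c pk1 qk1 νk1 - augLag F G A B c pstar qstar νstar) ≤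
        C * Real.sqrt (‖gradF pk1 + At (νk1 + c • (A pk1 - B qk1))‖ ^ 2
            + ‖gradG qk1 - B (νk1 + c • (A pk1 - B qk1))‖ ^ 2
            + ‖A pk1 - B qk1‖ ^ 2) := by
  obtain ⟨K, hK, hpre⟩ := A.exists_preimage_norm_le hAsurj
  have hKb : ∀ w : E₂, ‖w‖ ≤ K * ‖At w‖ := by
    intro w
    obtain ⟨x, hx, hxn⟩ := hpre w
    have h1 : ‖w‖ * ‖w‖ ≤ ‖x‖ * ‖At w‖ := by
      rw [← real_inner_self_eq_norm_mul_norm]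
      nth_rewrite 1 [← hx]
      rw [hAt]
      exact real_inner_le_norm _ _
    rcases eq_or_lt_of_le (norm_nonneg w) with h0 | h0
    · rw [← h0]; positivity
    · have h2 : ‖x‖ * ‖At w‖ ≤ K * ‖w‖ * ‖At w‖ :=
        mul_le_mul_of_nonneg_right hxn (norm_nonneg _)
      exact le_of_mul_le_mul_right (by linarith) h0
  obtain ⟨N, hN⟩ : ∃ N, N = ‖νstar‖ + ε := ⟨_, rfl⟩
  have hN0 : 0 ≤ N := by rw [hN]; positivity
  obtain ⟨D1, hD1⟩ : ∃ D, D = K * (1 + ‖At‖ * |c|) * ε + N := ⟨_, rfl⟩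
  obtain ⟨D0, hD0⟩ : ∃ D, D = K * (‖At‖ * N) * ε + ‖B‖ * N * ε + |σG| / 2 * ε ^ 2 := ⟨_, rfl⟩
  have hD1n : 0 ≤ D1 := by rw [hD1]; positivity
  have hD0n : 0 ≤ D0 := by rw [hD0]; positivity
  obtain ⟨D, hD⟩ : ∃ D, D = D0 / η ^ 2 + D1 / η + |c| / 2 := ⟨_, rfl⟩
  have hDn : 0 ≤ D := by rw [hD]; positivity
  refine ⟨D + 1, by positivity, ?_⟩
  intro p qk q νk ν νh h1 _ h3 _ _ hball _ hg
  set g := Real.sqrt (‖gradF p + At (ν + c • (A p - B q))‖ ^ 2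
            + ‖gradG q - B (ν + c • (A p - B q))‖ ^ 2
            + ‖A p - B q‖ ^ 2) with hgdef
  have hg0 : 0 < g := lt_of_lt_of_le hη hg
  have hg1 : ‖gradF p + At (ν + c • (A p - B q))‖ ≤ g :=
    Real.le_sqrt_of_sq_le (by nlinarith [sq_nonneg ‖gradG q - B (ν + c • (A p - B q))‖, sq_nonneg ‖A p - B q‖])
  have hg3 : ‖A p - B q‖ ≤ g :=
    Real.le_sqrt_of_sq_le (by nlinarith [sq_nonneg ‖gradG q - B (ν + c • (A p - B q))‖, sq_nonneg ‖gradF p + At (ν + c • (A p - B q))‖])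
  have hb1 : ‖A p - A pstar‖ ≤ ε := le_trans (Real.le_sqrt_of_sq_le (by nlinarith [sq_nonneg ‖q - qstar‖, sq_nonneg ‖ν - νstar‖])) hball
  have hb2 : ‖q - qstar‖ ≤ ε := le_trans (Real.le_sqrt_of_sq_le (by nlinarith [sq_nonneg ‖A p - A pstar‖, sq_nonneg ‖ν - νstar‖])) hball
  have hb3 : ‖ν - νstar‖ ≤ ε := le_trans (Real.le_sqrt_of_sq_le (by nlinarith [sq_nonneg ‖q - qstar‖, sq_nonneg ‖A p - A pstar‖])) hball
  have hν : ‖ν‖ ≤ N := by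
    have := norm_add_le (ν - νstar) νstar
    rw [sub_add_cancel] at this
    linarith
  have hm : ‖At (ν + c • (A p - B q))‖ ≤ ‖At‖ * (N + |c| * g) := by
    refine (At.le_opNorm _).trans (mul_le_mul_of_nonneg_left ?_ (norm_nonneg _))
    refine (norm_add_le _ _).trans (add_le_add hν ?_)
    rw [norm_smul, Real.norm_eq_abs]
    exact mul_le_mul_of_nonneg_left hg3 (abs_nonneg c)
  obtain ⟨w, hw⟩ : ∃ w, w = νk + c • (A p - B qk) := ⟨_, rfl⟩
  rw [← hw] at h1
  have hAw : ‖At w‖ ≤ g + ‖At‖ * (N + |c| * g) := by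
    have e : At w = At (ν + c • (A p - B q)) - (gradF p + At (ν + c • (A p - B q))) := by
      rw [h1]; abel
    rw [e]
    refine (norm_sub_le _ _).trans ?_
    linarith
  have hwb : ‖w‖ ≤ K * (g + ‖At‖ * (N + |c| * g)) :=
    (hKb w).trans (mul_le_mul_of_nonneg_left hAw hK.le)
  have hF : F p - F pstar ≤ K * (g + ‖At‖ * (N + |c| * g)) * ε := by
    have h := hFconv p pstar
    have e : ⟪gradF p, pstar - p⟫ = ⟪A p - A pstar, w⟫ := by
      rw [h1, ← map_sub, hAt, real_inner_comm, inner_neg_right, ← inner_neg_left, neg_sub]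
    have h2 := neg_le_of_abs_le (abs_real_inner_le_norm (A p - A pstar) w)
    have h4 : ‖A p - A pstar‖ * ‖w‖ ≤ ε * (K * (g + ‖At‖ * (N + |c| * g))) :=
      mul_le_mul hb1 hwb (norm_nonneg _) hε.le
    rw [e] at h
    linarith
  have hG : G q - G qstar ≤ ‖B‖ * N * ε + |σG| / 2 * ε ^ 2 := by
    have h := hGwc q qstar
    have h2 := neg_le_of_abs_le (abs_real_inner_le_norm (gradG q) (qstar - q))
    rw [norm_sub_rev qstar q] at h h2
    have h5 : ‖gradG q‖ ≤ ‖B‖ * N := by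
      rw [h3]
      exact (B.le_opNorm _).trans (mul_le_mul_of_nonneg_left hν (norm_nonneg _))
    have h6 : ‖gradG q‖ * ‖q - qstar‖ ≤ ‖B‖ * N * ε :=
      mul_le_mul h5 hb2 (norm_nonneg _) (by positivity)
    have h7 : σG / 2 * ‖q - qstar‖ ^ 2 ≤ |σG| / 2 * ε ^ 2 := by
      have a : σG / 2 * ‖q - qstar‖ ^ 2 ≤ |σG| / 2 * ‖q - qstar‖ ^ 2 :=
        mul_le_mul_of_nonneg_right (by linarith [le_abs_self σG]) (by positivity)
      refine a.trans ?_
      gcongr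
    linarith
  have hI : ⟪ν, A p - B q⟫ ≤ N * g :=
    (real_inner_le_norm _ _).trans (mul_le_mul hν hg3 (norm_nonneg _) hN0)
  have hC : c / 2 * ‖A p - B q‖ ^ 2 ≤ |c| / 2 * g ^ 2 := by
    have a : c / 2 * ‖A p - B q‖ ^ 2 ≤ |c| / 2 * ‖A p - B q‖ ^ 2 :=
      mul_le_mul_of_nonneg_right (by linarith [le_abs_self c]) (by positivity)
    refine a.trans ?_
    gcongr
  have hstar : augLag F G A B c pstar qstar νstar = F pstar + G qstar := by
    simp [augLag, hsta1]
  have htot : augLag F G A B c p q ν - augLag F G A B c pstar qstar νstar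
      ≤ D0 + D1 * g + |c| / 2 * g ^ 2 := by
    rw [hstar, hD0, hD1]
    unfold augLag
    linarith
  have hgη : 1 ≤ g / η := (one_le_div hη).2 hg
  have k0 : D0 ≤ D0 / η ^ 2 * g ^ 2 := by
    have : D0 / η ^ 2 * g ^ 2 = D0 * (g / η) ^ 2 := by field_simp
    rw [this]
    exact le_mul_of_one_le_right hD0n (one_le_pow₀ hgη)
  have k1 : D1 * g ≤ D1 / η * g ^ 2 := by
    have : D1 / η * g ^ 2 = D1 * g * (g / η) := by field_simp
    rw [this]
    exact le_mul_of_one_le_right (by positivity) hgη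
  have k2 : augLag F G A B c p q ν - augLag F G A B c pstar qstar νstar ≤ D * g ^ 2 := by
    rw [hD]; linarith
  apply Real.sqrt_le_iff.2
  refine ⟨by positivity, k2.trans ?_⟩
  rw [mul_pow]
  exact mul_le_mul_of_nonneg_right (by nlinarith) (by positivity)
end

section
/- (Linear convergence under a Łojasiewicz exponent of 1/2.) Let (w^k)_{k ≥ 0} be a sequence in ℝⁿ and (L^k)_{k ≥ 0} a nonincreasing sequence of nonnegative reals, and let C₁, C₂ > 0 be constants such that for all k ≥ 1: L^k − L^{k+1} ≥ C₁ ‖w^{k+1} − w^k‖² and (L^k)^{1/2} ≤ C₂ ‖w^k − w^{k−1}‖. Then ∑_{k ≥ 0} ‖w^{k+1} − w^k‖ < ∞, so w^k converges to some limit w^∞, and there exists Q ∈ (0,1), depending only on C₁ and C₂ (one may take Q = (1 + 2C₂²/C₁)/(2 + 2C₂²/C₁)), such that the tails Δ_k := ∑_{l ≥ k} ‖w^{l+1} − w^l‖ satisfy Δ_k ≤ Q Δ_{k−1} for all k ≥ 1; consequently there exists τ > 0 with ‖w^k − w^∞‖ ≤ τ Q^k for all k. -/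
theorem kl_step (C₁ C₂ x y s t : ℝ) (hC₁ : 0 < C₁) (hC₂ : 0 < C₂) (hx : 0 ≤ x) (hy : 0 ≤ y)
    (ht : 0 ≤ t) (hts : t ≤ s) (h1 : C₁ * y ^ 2 ≤ s ^ 2 - t ^ 2) (h2 : s ≤ C₂ * x) :
    y ≤ x / 2 + C₂ / C₁ * (s - t) := by
  set D := C₂ / C₁ * (s - t) with hD
  have hD0 : 0 ≤ D := mul_nonneg (by positivity) (by linarith)
  have e : C₁ * D = C₂ * (s - t) := by rw [hD]; field_simp
  have h3 : C₁ * y ^ 2 ≤ C₁ * (2 * x * D) := by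
    have : C₁ * (2 * x * D) = 2 * (C₂ * x) * (s - t) := by
      linear_combination 2 * x * e
    rw [this]
    nlinarith [mul_nonneg (sub_nonneg.2 h2) (sub_nonneg.2 hts), mul_self_nonneg (s - t)]
  have h4 : y ^ 2 ≤ 2 * x * D := le_of_mul_le_mul_left h3 hC₁
  refine (abs_le_of_sq_le_sq' ?_ (by positivity)).2
  nlinarith [sq_nonneg (x / 2 - D)]

theorem kl_sum (a s : ℕ → ℝ) (D : ℝ) (h : ∀ k, a (k + 1) ≤ a k / 2 + D * (s k - s (k + 1)))
    (k N : ℕ) : ∑ i ∈ Finset.range N, a (k + 1 + i) ≤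
      (∑ i ∈ Finset.range N, a (k + i)) / 2 + D * (s k - s (k + N)) := by
  induction N with
  | zero => simp
  | succ N ih =>
    rw [Finset.sum_range_succ, Finset.sum_range_succ]
    have := h (k + N)
    rw [show k + 1 + N = k + N + 1 by ring, show k + (N + 1) = k + N + 1 by ring]
    linarith

theorem kl_summable (a s : ℕ → ℝ) (D : ℝ) (hD : 0 ≤ D) (ha : ∀ k, 0 ≤ a k) (hs : ∀ k, 0 ≤ s k)
    (h : ∀ k, a (k + 1) ≤ a k / 2 + D * (s k - s (k + 1))) : Summable a := by
  apply summable_of_sum_range_le (c := 2 * (a 0 + D * s 0)) ha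
  intro N
  have h1 := kl_sum a s D h 0 N
  have h2 := Finset.sum_range_succ' a N
  have h3 := Finset.sum_range_succ a N
  have h4 := ha N
  have h5 := mul_nonneg hD (hs (0 + N))
  have e1 : ∀ i, 0 + 1 + i = i + 1 := fun i => by ring
  simp only [e1, zero_add] at h1 h5
  linarith

theorem kl_tail (a s : ℕ → ℝ) (D : ℝ) (hD : 0 ≤ D) (ha : ∀ k, 0 ≤ a k) (hs : ∀ k, 0 ≤ s k)
    (h : ∀ k, a (k + 1) ≤ a k / 2 + D * (s k - s (k + 1))) (k : ℕ) :
    ∑' i, a (k + 1 + i) ≤ (∑' i, a (k + i)) / 2 + D * s k := by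
  have hsum := kl_summable a s D hD ha hs h
  have hk : Summable fun i => a (k + i) := hsum.comp_injective (add_right_injective k)
  apply Real.tsum_le_of_sum_range_le (fun i => ha _)
  intro N
  have h1 := kl_sum a s D h k N
  have h2 := hk.sum_le_tsum (Finset.range N) (fun i _ => ha _)
  have h5 := mul_nonneg hD (hs (k + N))
  linarith

/-- (Linear convergence under a Łojasiewicz exponent of `1/2`.)
Let `(wᵏ)` be a sequence in `ℝⁿ` and `(Lᵏ)` a nonincreasing sequence of nonnegative
reals with constants `C₁, C₂ > 0` such that for all `k ≥ 1`:
`Lᵏ - Lᵏ⁺¹ ≥ C₁ ‖wᵏ⁺¹ - wᵏ‖²` and `(Lᵏ)^{1/2} ≤ C₂ ‖wᵏ - wᵏ⁻¹‖`. Then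
`∑ₖ ‖wᵏ⁺¹ - wᵏ‖ < ∞`, so `wᵏ` converges to some `w^∞`; moreover with
`Q := (1 + 2C₂²/C₁)/(2 + 2C₂²/C₁) ∈ (0,1)`, the tails
`Δ_k := ∑_{l ≥ k} ‖w^{l+1} - w^l‖` satisfy `Δ_k ≤ Q Δ_{k-1}` for all `k ≥ 1`, and
there is `τ > 0` with `‖wᵏ - w^∞‖ ≤ τ Qᵏ` for all `k`. -/
theorem linear_convergence_of_kl_half {n : ℕ}
    (w : ℕ → EuclideanSpace ℝ (Fin n)) (L : ℕ → ℝ)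
    (hLmono : ∀ k, L (k + 1) ≤ L k) (hLnonneg : ∀ k, 0 ≤ L k)
    (C₁ C₂ : ℝ) (hC₁ : 0 < C₁) (hC₂ : 0 < C₂)
    (hdec : ∀ k ≥ 1, C₁ * ‖w (k + 1) - w k‖ ^ 2 ≤ L k - L (k + 1))
    (hkl : ∀ k ≥ 1, Real.sqrt (L k) ≤ C₂ * ‖w k - w (k - 1)‖) :
    Summable (fun k => ‖w (k + 1) - w k‖) ∧
    ∃ winf : EuclideanSpace ℝ (Fin n),
      Filter.Tendsto w Filter.atTop (nhds winf) ∧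
      (0 < (1 + 2 * C₂ ^ 2 / C₁) / (2 + 2 * C₂ ^ 2 / C₁) ∧
        (1 + 2 * C₂ ^ 2 / C₁) / (2 + 2 * C₂ ^ 2 / C₁) < 1) ∧
      (∀ k ≥ 1, (∑' l : ℕ, ‖w (k + l + 1) - w (k + l)‖) ≤
        ((1 + 2 * C₂ ^ 2 / C₁) / (2 + 2 * C₂ ^ 2 / C₁)) *
          ∑' l : ℕ, ‖w ((k - 1) + l + 1) - w ((k - 1) + l)‖) ∧
      ∃ τ > 0, ∀ k,
        ‖w k - winf‖ ≤ τ * ((1 + 2 * C₂ ^ 2 / C₁) / (2 + 2 * C₂ ^ 2 / C₁)) ^ k := by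
  set c := C₂ ^ 2 / C₁ with hc
  have hc0 : 0 < c := by positivity
  have hcc : 2 * C₂ ^ 2 / C₁ = 2 * c := by rw [hc]; ring
  rw [hcc]
  set Q := (1 + 2 * c) / (2 + 2 * c) with hQ
  have hQ0 : 0 < Q := by positivity
  have hQ1 : Q < 1 := by rw [hQ, div_lt_one (by positivity)]; linarith
  set a : ℕ → ℝ := fun k => ‖w (k + 1) - w k‖ with hadef
  have ha : ∀ k, 0 ≤ a k := fun k => norm_nonneg _
  set s : ℕ → ℝ := fun k => Real.sqrt (L (k + 1)) with hsdef
  have hs : ∀ k, 0 ≤ s k := fun k => Real.sqrt_nonneg _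
  have hD : 0 ≤ C₂ / C₁ := by positivity
  have hsa : ∀ k, s k ≤ C₂ * a k := fun k => hkl (k + 1) (by omega)
  have h : ∀ k, a (k + 1) ≤ a k / 2 + C₂ / C₁ * (s k - s (k + 1)) := by
    intro k
    refine kl_step C₁ C₂ _ _ _ _ hC₁ hC₂ (ha _) (ha _) (hs _) (Real.sqrt_le_sqrt (hLmono _)) ?_
      (hsa k)
    simp only [hsdef, Real.sq_sqrt (hLnonneg _)]
    exact hdec (k + 1) (by omega)
  have hsum : Summable a := kl_summable a s _ hD ha hs h
  have hsumk : ∀ k, Summable fun i => a (k + i) :=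
    fun k => hsum.comp_injective (add_right_injective k)
  have htail : ∀ k, ∑' i, a (k + 1 + i) ≤ Q * ∑' i, a (k + i) := by
    intro k
    have h1 := kl_tail a s _ hD ha hs h k
    have h2 := (hsumk k).tsum_eq_zero_add
    have e1 : ∀ i, k + (i + 1) = k + 1 + i := fun i => by ring
    rw [add_zero, tsum_congr (fun i => congrArg a (e1 i))] at h2
    have h3 : C₂ / C₁ * s k ≤ c * a k := by
      calc C₂ / C₁ * s k ≤ C₂ / C₁ * (C₂ * a k) := mul_le_mul_of_nonneg_left (hsa k) hD
        _ = c * a k := by rw [hc]; ring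
    rw [hQ, div_mul_eq_mul_div, le_div_iff₀ (by positivity)]
    have h4 : a k = ∑' i, a (k + i) - ∑' i, a (k + 1 + i) := by linarith
    rw [h4] at h3
    linarith
  have hd : ∀ k, dist (w k) (w k.succ) ≤ a k := fun k => by
    rw [dist_comm, dist_eq_norm]
  obtain ⟨winf, hw⟩ := cauchySeq_tendsto_of_complete (cauchySeq_of_dist_le_of_summable a hd hsum)
  refine ⟨hsum, winf, hw, ⟨hQ0, hQ1⟩, ?_, ∑' i, a (0 + i) + 1, ?_, ?_⟩
  · intro k hk
    obtain ⟨k, rfl⟩ : ∃ j, k = j + 1 := ⟨k - 1, by omega⟩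
    exact htail k
  · have : 0 ≤ ∑' i, a (0 + i) := tsum_nonneg fun i => ha _
    linarith
  · intro k
    have h1 : ‖w k - winf‖ ≤ ∑' i, a (k + i) := by
      rw [← dist_eq_norm]
      exact dist_le_tsum_of_dist_le_of_tendsto a hd hsum hw k
    have h2 : ∀ k, ∑' i, a (k + i) ≤ (∑' i, a (0 + i)) * Q ^ k := by
      intro k
      induction k with
      | zero => simp
      | succ k ih =>
        calc _ ≤ Q * ∑' i, a (k + i) := htail k
          _ ≤ Q * ((∑' i, a (0 + i)) * Q ^ k) := mul_le_mul_of_nonneg_left ih hQ0.le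
          _ = _ := by ring
    have h3 := h2 k
    have h4 : 0 < Q ^ k := by positivity
    rw [add_mul, one_mul]
    linarith
end

section
/- (Q-linear convergence of function values and R-linear convergence of iterates.) Let (w^k)_{k ≥ 0} be a sequence in ℝⁿ converging to a point w*, let (Δ^k)_{k ≥ 0} be a nonincreasing sequence of nonnegative reals, and let ρ > 0, K > 0, η ≥ 0 with Kη < 1 be constants such that for all k: ρ ‖w^k − w^{k+1}‖² ≤ Δ^k − Δ^{k+1}, Δ^{k+1} ≤ K (Δ^k − Δ^{k+1}) + K ‖w^{k+1} − w*‖², and ‖w^{k+1} − w*‖² ≤ η Δ^{k+1}. Then Δ^{k+1} ≤ Q Δ^k for all k with Q := K/(1 + K − Kη) ∈ (0,1), so (Δ^k) converges Q-linearly to 0; and there exists τ > 0 such that ‖w^k − w*‖ ≤ τ (√Q)^k for all k, i.e. (w^k) converges R-linearly to w*. -/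
/-- (Q-linear convergence of function values and R-linear convergence
of iterates.) Let `(wᵏ)` be a sequence in `ℝⁿ` converging to `w*`, `(Δᵏ)` a nonincreasing
sequence of nonnegative reals, and `ρ > 0`, `K > 0`, `η ≥ 0` with `K η < 1` such that for
all `k`: `ρ ‖wᵏ - wᵏ⁺¹‖² ≤ Δᵏ - Δᵏ⁺¹`, `Δᵏ⁺¹ ≤ K (Δᵏ - Δᵏ⁺¹) + K ‖wᵏ⁺¹ - w*‖²`, and
`‖wᵏ⁺¹ - w*‖² ≤ η Δᵏ⁺¹`. Then with `Q := K/(1 + K - K η) ∈ (0,1)` one has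
`Δᵏ⁺¹ ≤ Q Δᵏ` for all `k` (Q-linear convergence of `(Δᵏ)` to `0`), and there exists
`τ > 0` with `‖wᵏ - w*‖ ≤ τ (√Q)ᵏ` for all `k` (R-linear convergence of `(wᵏ)`). -/
theorem qlinear_values_rlinear_iterates {n : ℕ}
    (w : ℕ → EuclideanSpace ℝ (Fin n)) (wstar : EuclideanSpace ℝ (Fin n))
    (hconv : Filter.Tendsto w Filter.atTop (nhds wstar))
    (Δ : ℕ → ℝ) (hΔmono : ∀ k, Δ (k + 1) ≤ Δ k) (hΔnonneg : ∀ k, 0 ≤ Δ k)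
    (ρ K η : ℝ) (hρ : 0 < ρ) (hK : 0 < K) (hη : 0 ≤ η) (hKη : K * η < 1)
    (h1 : ∀ k, ρ * ‖w k - w (k + 1)‖ ^ 2 ≤ Δ k - Δ (k + 1))
    (h2 : ∀ k, Δ (k + 1) ≤ K * (Δ k - Δ (k + 1)) + K * ‖w (k + 1) - wstar‖ ^ 2)
    (h3 : ∀ k, ‖w (k + 1) - wstar‖ ^ 2 ≤ η * Δ (k + 1)) :
    (0 < K / (1 + K - K * η) ∧ K / (1 + K - K * η) < 1) ∧
    (∀ k, Δ (k + 1) ≤ (K / (1 + K - K * η)) * Δ k) ∧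
    ∃ τ > 0, ∀ k, ‖w k - wstar‖ ≤ τ * Real.sqrt (K / (1 + K - K * η)) ^ k := by
  have hD : 0 < 1 + K - K * η := by linarith
  have hQ0 : 0 < K / (1 + K - K * η) := div_pos hK hD
  have hQ1 : K / (1 + K - K * η) < 1 := by
    rw [div_lt_one hD]; linarith
  have hstep : ∀ k, Δ (k + 1) ≤ (K / (1 + K - K * η)) * Δ k := by
    intro k
    rw [div_mul_eq_mul_div, le_div_iff₀ hD]
    have := mul_le_mul_of_nonneg_left (h3 k) hK.le
    nlinarith [h2 k]
  refine ⟨⟨hQ0, hQ1⟩, hstep, ?_⟩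
  generalize K / (1 + K - K * η) = Q at *
  have hpow : ∀ k, Δ k ≤ Q ^ k * Δ 0 := by
    intro k
    induction k with
    | zero => simp
    | succ k ih =>
      calc Δ (k + 1) ≤ Q * Δ k := hstep k
        _ ≤ Q * (Q ^ k * Δ 0) := mul_le_mul_of_nonneg_left ih hQ0.le
        _ = Q ^ (k + 1) * Δ 0 := by ring
  have hs := Real.sqrt_nonneg (η * Δ 0)
  have hn := norm_nonneg (w 0 - wstar)
  refine ⟨Real.sqrt (η * Δ 0) + ‖w 0 - wstar‖ + 1, by positivity, ?_⟩
  intro k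
  cases k with
  | zero => simp only [pow_zero, mul_one]; linarith
  | succ k =>
    have hp : 0 ≤ Real.sqrt Q ^ (k + 1) := by positivity
    have hsq : (Real.sqrt Q ^ (k + 1)) ^ 2 = Q ^ (k + 1) := by
      rw [← pow_mul, mul_comm, pow_mul, Real.sq_sqrt hQ0.le]
    have hle : ‖w (k + 1) - wstar‖ ≤ Real.sqrt (η * Δ 0) * Real.sqrt Q ^ (k + 1) := by
      refine (pow_le_pow_iff_left₀ (norm_nonneg _) (by positivity) two_ne_zero).1 ?_
      rw [mul_pow, hsq, Real.sq_sqrt (mul_nonneg hη (hΔnonneg 0))]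
      calc _ ≤ η * Δ (k + 1) := h3 k
        _ ≤ η * (Q ^ (k + 1) * Δ 0) := mul_le_mul_of_nonneg_left (hpow _) hη
        _ = _ := by ring
    refine hle.trans (mul_le_mul_of_nonneg_right (by linarith) hp)
end
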